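/- Let q ∈ ℂ with 0 < |q| < 1, let x ∈ ℂ∖{0} with |q| < |x| < |q|^{−1}, and let ξ ∈ ℂ with |ξ| < 1. Then Σ_{k=0}^∞ (qx;q)_k (qx^{−1};q)_k ξ^k = (qx;q)_∞ (qx^{−1};q)_∞ · Σ_{n=0}^∞ Σ_{ℓ=0}^{n} q^n x^{2ℓ−n} / ((q;q)_ℓ (q;q)_{n−ℓ} (1 − q^n ξ)). In particular the right-hand side provides the meromorphic continuation of the q-Borel transform of the divergent series Σ_k (−1)^k q^{−k(k+1)/2}(qx;q)_k(qx^{−1};q)_k t^k, with simple poles only at ξ ∈ q^{−ℕ}. -/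

import Mathlib

open Finset Filter

/-- Finite q-Pochhammer symbol `(x;q)_k = ∏_{j=0}^{k-1} (1 - x q^j)`. -/
noncomputable def qPoch (x q : ℂ) (k : ℕ) : ℂ := ∏ j ∈ Finset.range k, (1 - x * q ^ j)

/-- Infinite q-Pochhammer symbol `(x;q)_∞ = ∏_{j=0}^{∞} (1 - x q^j)`. -/
noncomputable def qPochInf (x q : ℂ) : ℂ := ∏' j : ℕ, (1 - x * q ^ j)

/-- The Jacobi theta function `θ(t;q) = Σ_{k∈ℤ} (−1)^k q^{k(k+1)/2} t^k`. -/
noncomputable def jtheta (t q : ℂ) : ℂ :=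
  ∑' k : ℤ, (-1 : ℂ) ^ k * q ^ (k * (k + 1) / 2) * t ^ k

/-- The derivative `θ'(t;q) = Σ_{k∈ℤ} (−1)^k k q^{k(k+1)/2} t^k` (with respect to t d/dt). -/
noncomputable def jthetaD (t q : ℂ) : ℂ :=
  ∑' k : ℤ, (-1 : ℂ) ^ k * (k : ℂ) * q ^ (k * (k + 1) / 2) * t ^ k

/-- The Eisenstein-type series `E₁(q) = 1 − 4 Σ_{j=1}^∞ q^j/(1−q^j)`. -/
noncomputable def E1 (q : ℂ) : ℂ := 1 - 4 * ∑' j : ℕ, q ^ (j + 1) / (1 - q ^ (j + 1))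

/-- The Appell-Lerch sum
`AL(t,λ,q) = θ(λ;q)⁻¹ Σ_{ℓ∈ℤ} (−1)^ℓ q^{ℓ(ℓ+1)/2} λ^ℓ / (1 − λ t q^ℓ)`. -/
noncomputable def AL (t lam q : ℂ) : ℂ :=
  (jtheta lam q)⁻¹ *
    ∑' k : ℤ, (-1 : ℂ) ^ k * q ^ (k * (k + 1) / 2) * lam ^ k / (1 - lam * t * q ^ k)

/-- The solution `g^{(0,0)}(t,q) = Σ_{k≥0} (−1)^k q^{k(k+1)/2} (q;q)_k^{−2} t^{−1−k}`. -/
noncomputable def g00 (t q : ℂ) : ℂ :=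
  ∑' k : ℕ, (-1 : ℂ) ^ k * q ^ (k * (k + 1) / 2) / (qPoch q q k) ^ 2 * t ^ (-1 - (k : ℤ))

/-- The solution `g^{(0,1)}(t,q)`. -/
noncomputable def g01 (t q : ℂ) : ℂ :=
  ∑' k : ℕ,
    (E1 q / 2 - 1 / 2 - jthetaD t⁻¹ q / jtheta t⁻¹ q +
        ∑ j ∈ Finset.range k, (1 + q ^ (j + 1)) / (1 - q ^ (j + 1))) *
      ((-1 : ℂ) ^ k * q ^ (k * (k + 1) / 2) / (qPoch q q k) ^ 2 * t ^ (-1 - (k : ℤ)))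

open scoped Topology

/-! Euler's identity `(z;q)_∞ · Σ_n z^n / (q;q)_n = 1` turns each finite product into an
exponential sum, `(z;q)_k = (z;q)_∞ / (q^k z;q)_∞ = (z;q)_∞ · Σ_n z^n q^{nk} / (q;q)_n`. The Cauchy
product of two such sums is again of the form `Σ_n c_n q^{nk}`, so summing it against `ξ^k` and
exchanging the summations leaves the geometric series `Σ_k (q^n ξ)^k = 1 / (1 - q^n ξ)`. -/

lemma tsum_tsum_mul_pow {ι 𝕜 : Type*} [NormedField 𝕜] [CompleteSpace 𝕜] {c a : ι → 𝕜} {r : ℝ}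
    (hc : Summable fun i => ‖c i‖) (ha : ∀ i, ‖a i‖ ≤ r) (hr : r < 1) :
    ∑' k : ℕ, ∑' i, c i * a i ^ k = ∑' i, c i / (1 - a i) := by
  rcases isEmpty_or_nonempty ι with _ | ⟨⟨i₀⟩⟩
  · simp
  have hr0 : 0 ≤ r := (norm_nonneg _).trans (ha i₀)
  have hsum : Summable (Function.uncurry fun (k : ℕ) i => c i * a i ^ k) := by
    refine Summable.of_norm_bounded
      ((summable_geometric_of_lt_one hr0 hr).mul_of_nonneg hc
        (fun _ => by positivity) (fun _ => by positivity)) fun ⟨k, i⟩ => ?_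
    rw [Function.uncurry_apply_pair, norm_mul, norm_pow, mul_comm]
    gcongr
    exact ha i
  rw [← hsum.tsum_comm]
  refine tsum_congr fun i => ?_
  rw [tsum_mul_left, tsum_geometric_of_norm_lt_one ((ha i).trans_lt hr), div_eq_mul_inv]

lemma norm_pow_mul_le {𝕜 : Type*} [NormedDivisionRing 𝕜] {q : 𝕜} (hq : ‖q‖ ≤ 1) (z : 𝕜) (n : ℕ) :
    ‖q ^ n * z‖ ≤ ‖z‖ := by
  rw [norm_mul, norm_pow]
  exact mul_le_of_le_one_left (norm_nonneg _) (pow_le_one₀ (norm_nonneg _) hq)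

lemma one_sub_mul_pow_ne_zero {𝕜 : Type*} [NormedField 𝕜] {z q : 𝕜} (hz : ‖z‖ < 1)
    (hq : ‖q‖ ≤ 1) (n : ℕ) : 1 - z * q ^ n ≠ 0 := by
  intro h
  have hlt : ‖z * q ^ n‖ < 1 := by
    rw [mul_comm]
    exact (norm_pow_mul_le hq z n).trans_lt hz
  rw [← sub_eq_zero.mp h, norm_one] at hlt
  exact lt_irrefl _ hlt

lemma mul_pow_mul_mul_inv_pow_sub {𝕜 : Type*} [Field 𝕜] (q : 𝕜) {x : 𝕜} (hx : x ≠ 0) {l n : ℕ}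
    (hl : l ≤ n) : (q * x) ^ l * (q * x⁻¹) ^ (n - l) = q ^ n * x ^ (2 * (l : ℤ) - n) := by
  have hexp : 2 * (l : ℤ) - n = l - (n - l : ℕ) := by omega
  rw [hexp, zpow_sub₀ hx, zpow_natCast, zpow_natCast, ← pow_mul_pow_sub q hl, mul_pow, mul_pow,
    inv_pow, div_eq_mul_inv, mul_mul_mul_comm]

lemma qPoch_zero (z q : ℂ) : qPoch z q 0 = 1 :=
  Finset.prod_range_zero _

lemma qPoch_succ (z q : ℂ) (n : ℕ) : qPoch z q (n + 1) = qPoch z q n * (1 - z * q ^ n) :=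
  Finset.prod_range_succ _ _

lemma tendsto_qPoch {q : ℂ} (hq : ‖q‖ < 1) (z : ℂ) :
    Tendsto (qPoch z q) atTop (𝓝 (qPochInf z q)) := by
  have hsum : Summable fun j : ℕ => ‖-(z * q ^ j)‖ := by
    simpa only [norm_neg, norm_mul, norm_pow] using
      (summable_geometric_of_lt_one (norm_nonneg q) hq).mul_left ‖z‖
  have hprod := (multipliable_one_add_of_summable hsum).hasProd.tendsto_prod_nat
  simp only [← sub_eq_add_neg] at hprod
  exact hprod

section qExp

/-- Euler's `q`-exponential series `e_q(z) = Σ_{n≥0} z^n / (q;q)_n`, with the arguments in the order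
of `qPoch`. -/
noncomputable def qExp (z q : ℂ) : ℂ := ∑' n : ℕ, z ^ n / qPoch q q n

variable {q z : ℂ}

lemma pow_succ_div_qPoch_succ (q z : ℂ) (n : ℕ) :
    z ^ (n + 1) / qPoch q q (n + 1) = z / (1 - q * q ^ n) * (z ^ n / qPoch q q n) := by
  rw [pow_succ', qPoch_succ, mul_comm (qPoch q q n), mul_div_mul_comm]

lemma summable_norm_pow_div_qPoch (hq : ‖q‖ < 1) (hz : ‖z‖ < 1) :
    Summable fun n : ℕ => ‖z ^ n / qPoch q q n‖ := by
  obtain ⟨r, hzr, hr⟩ := exists_between hz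
  have hratio : Tendsto (fun n : ℕ => ‖z / (1 - q * q ^ n)‖) atTop (𝓝 ‖z‖) := by
    have hpow := (tendsto_pow_atTop_nhds_zero_of_norm_lt_one hq).const_mul q
    simpa using (tendsto_const_nhds.div (hpow.const_sub 1) (by simp)).norm (a := z / (1 - q * 0))
  refine summable_of_ratio_norm_eventually_le hr ?_
  filter_upwards [hratio.eventually_le_const hzr] with n hn
  rw [norm_norm, norm_norm, pow_succ_div_qPoch_succ, norm_mul]
  gcongr

lemma qExp_zero (q : ℂ) : qExp 0 q = 1 := by
  rw [qExp, tsum_eq_single 0 fun n hn => by rw [zero_pow hn, zero_div], qPoch_zero, pow_zero,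
    div_one]

lemma continuousAt_qExp (hq : ‖q‖ < 1) (hz : ‖z‖ < 1) : ContinuousAt (qExp · q) z := by
  obtain ⟨r, hzr, hr⟩ := exists_between hz
  have hr0 : 0 ≤ r := (norm_nonneg z).trans hzr.le
  have hnorm : ‖(r : ℂ)‖ = r := Complex.norm_of_nonneg hr0
  have hcont : ContinuousOn (qExp · q) (Metric.closedBall 0 r) := by
    refine continuousOn_tsum (fun n => by fun_prop)
      (summable_norm_pow_div_qPoch hq (hnorm.trans_lt hr)) fun n y hy => ?_
    rw [norm_div, norm_div, norm_pow, norm_pow, hnorm]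
    gcongr
    exact mem_closedBall_zero_iff.mp hy
  exact hcont.continuousAt (Metric.closedBall_mem_nhds_of_mem (mem_ball_zero_iff.mpr hzr))

lemma qExp_mul_left (hq : ‖q‖ < 1) (hz : ‖z‖ < 1) : qExp (q * z) q = (1 - z) * qExp z q := by
  have hqz : ‖q * z‖ < 1 := by simpa using (norm_pow_mul_le hq.le z 1).trans_lt hz
  have hsum := (summable_norm_pow_div_qPoch hq hz).of_norm
  have hsum' := (summable_norm_pow_div_qPoch hq hqz).of_norm
  have hterm (n : ℕ) : z ^ (n + 1) / qPoch q q (n + 1) - (q * z) ^ (n + 1) / qPoch q q (n + 1) =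
      z * (z ^ n / qPoch q q n) := by
    have hne := one_sub_mul_pow_ne_zero hq hq.le n
    rw [mul_pow, mul_div_assoc, pow_succ_div_qPoch_succ]
    field_simp
    ring
  have hdiff : qExp z q - qExp (q * z) q = z * qExp z q := by
    simp only [qExp]
    rw [← hsum.tsum_sub hsum', (hsum.sub hsum').tsum_eq_zero_add, tsum_congr hterm, tsum_mul_left,
      pow_zero, pow_zero, sub_self, zero_add]
  linear_combination -hdiff

lemma qExp_pow_mul (hq : ‖q‖ < 1) (hz : ‖z‖ < 1) (k : ℕ) :
    qExp (q ^ k * z) q = qPoch z q k * qExp z q := by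
  induction k with
  | zero => rw [pow_zero, one_mul, qPoch_zero, one_mul]
  | succ k ih =>
    rw [pow_succ', mul_assoc, qExp_mul_left hq ((norm_pow_mul_le hq.le z k).trans_lt hz), ih,
      qPoch_succ]
    ring

theorem qPochInf_mul_qExp (hq : ‖q‖ < 1) (hz : ‖z‖ < 1) : qPochInf z q * qExp z q = 1 := by
  have hpow : Tendsto (fun k : ℕ => q ^ k * z) atTop (𝓝 0) := by
    simpa using (tendsto_pow_atTop_nhds_zero_of_norm_lt_one hq).mul_const z
  have hone : Tendsto (fun k : ℕ => qExp (q ^ k * z) q) atTop (𝓝 1) := by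
    have hcont : Tendsto (qExp · q) (𝓝 0) (𝓝 (qExp 0 q)) := continuousAt_qExp hq (by simp)
    rw [qExp_zero] at hcont
    exact hcont.comp hpow
  simp only [qExp_pow_mul hq hz] at hone
  exact tendsto_nhds_unique ((tendsto_qPoch hq z).mul_const _) hone

lemma qPoch_eq_qPochInf_mul_qExp (hq : ‖q‖ < 1) (hz : ‖z‖ < 1) (k : ℕ) :
    qPoch z q k = qPochInf z q * qExp (q ^ k * z) q := by
  rw [qExp_pow_mul hq hz, mul_left_comm, qPochInf_mul_qExp hq hz, mul_one]

end qExp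

section rogersSzegoCoeff

/-- The coefficient of `t^n` in `e_q(zt) e_q(wt)`, that is, the homogeneous Rogers–Szegő polynomial
of degree `n` in `z` and `w` divided by `(q;q)_n`. -/
noncomputable def rogersSzegoCoeff (z w q : ℂ) (n : ℕ) : ℂ :=
  ∑ l ∈ Finset.range (n + 1), z ^ l * w ^ (n - l) / (qPoch q q l * qPoch q q (n - l))

variable {q z w : ℂ}

lemma rogersSzegoCoeff_mul_mul (a z w q : ℂ) (n : ℕ) :
    rogersSzegoCoeff (a * z) (a * w) q n = a ^ n * rogersSzegoCoeff z w q n := by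
  rw [rogersSzegoCoeff, rogersSzegoCoeff, Finset.mul_sum]
  refine Finset.sum_congr rfl fun l hl => ?_
  rw [← pow_mul_pow_sub a (Finset.mem_range_succ_iff.mp hl)]
  ring

lemma summable_norm_rogersSzegoCoeff (hq : ‖q‖ < 1) (hz : ‖z‖ < 1) (hw : ‖w‖ < 1) :
    Summable fun n => ‖rogersSzegoCoeff z w q n‖ := by
  simpa only [rogersSzegoCoeff, div_mul_div_comm] using
    summable_norm_sum_mul_range_of_summable_norm (summable_norm_pow_div_qPoch hq hz)
      (summable_norm_pow_div_qPoch hq hw)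

lemma qExp_mul_qExp (hq : ‖q‖ < 1) (hz : ‖z‖ < 1) (hw : ‖w‖ < 1) :
    qExp z q * qExp w q = ∑' n, rogersSzegoCoeff z w q n := by
  simpa only [qExp, rogersSzegoCoeff, div_mul_div_comm] using
    tsum_mul_tsum_eq_tsum_sum_range_of_summable_norm (summable_norm_pow_div_qPoch hq hz)
      (summable_norm_pow_div_qPoch hq hw)

lemma qPoch_mul_qPoch (hq : ‖q‖ < 1) (hz : ‖z‖ < 1) (hw : ‖w‖ < 1) (k : ℕ) :
    qPoch z q k * qPoch w q k =
      qPochInf z q * qPochInf w q * ∑' n, rogersSzegoCoeff z w q n * (q ^ n) ^ k := by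
  have hexp := qExp_mul_qExp hq ((norm_pow_mul_le hq.le z k).trans_lt hz)
    ((norm_pow_mul_le hq.le w k).trans_lt hw)
  simp only [rogersSzegoCoeff_mul_mul, pow_right_comm q k, mul_comm ((q ^ _) ^ k)] at hexp
  rw [qPoch_eq_qPochInf_mul_qExp hq hz, qPoch_eq_qPochInf_mul_qExp hq hw, ← hexp,
    mul_mul_mul_comm]

end rogersSzegoCoeff

theorem borel_transform_continuation_general {q z w ξ : ℂ} (hq : ‖q‖ < 1) (hz : ‖z‖ < 1)
    (hw : ‖w‖ < 1) (hξ : ‖ξ‖ < 1) :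
    ∑' k : ℕ, qPoch z q k * qPoch w q k * ξ ^ k =
      qPochInf z q * qPochInf w q *
        ∑' n : ℕ, ∑ l ∈ Finset.range (n + 1),
          z ^ l * w ^ (n - l) / (qPoch q q l * qPoch q q (n - l) * (1 - q ^ n * ξ)) := by
  calc ∑' k : ℕ, qPoch z q k * qPoch w q k * ξ ^ k
      = ∑' k : ℕ, qPochInf z q * qPochInf w q *
          ∑' n, rogersSzegoCoeff z w q n * (q ^ n * ξ) ^ k := by
        simp only [qPoch_mul_qPoch hq hz hw, mul_pow, ← mul_assoc, tsum_mul_right]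
    _ = qPochInf z q * qPochInf w q * ∑' n, rogersSzegoCoeff z w q n / (1 - q ^ n * ξ) := by
        rw [tsum_mul_left, tsum_tsum_mul_pow (summable_norm_rogersSzegoCoeff hq hz hw)
          (norm_pow_mul_le hq.le ξ) hξ]
    _ = _ := by simp only [rogersSzegoCoeff, Finset.sum_div, div_div]

/-- Identity giving the meromorphic continuation of the q-Borel transform of the
divergent series `Σ_k (−1)^k q^{−k(k+1)/2}(qx;q)_k(qx^{−1};q)_k t^k`. -/
theorem borel_transform_continuation
    (q : ℂ) (hq0 : 0 < ‖q‖) (hq1 : ‖q‖ < 1)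
    (x : ℂ) (hx : x ≠ 0)
    (hx1 : ‖q‖ < ‖x‖) (hx2 : ‖x‖ < ‖q‖⁻¹)
    (ξ : ℂ) (hξ : ‖ξ‖ < 1) :
    ∑' k : ℕ, qPoch (q * x) q k * qPoch (q * x⁻¹) q k * ξ ^ k =
      qPochInf (q * x) q * qPochInf (q * x⁻¹) q *
        ∑' n : ℕ, ∑ l ∈ Finset.range (n + 1),
          q ^ n * x ^ (2 * (l : ℤ) - n) /
            (qPoch q q l * qPoch q q (n - l) * (1 - q ^ n * ξ)) := by
  have hqx : ‖q * x‖ < 1 := by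
    rwa [norm_mul, ← lt_inv_mul_iff₀ hq0, mul_one]
  have hqx' : ‖q * x⁻¹‖ < 1 := by
    rwa [norm_mul, norm_inv, ← div_eq_mul_inv, div_lt_one (norm_pos_iff.mpr hx)]
  rw [borel_transform_continuation_general hq1 hqx hqx' hξ]
  refine congrArg _ (tsum_congr fun n => Finset.sum_congr rfl fun l hl => ?_)
  rw [mul_pow_mul_mul_inv_pow_sub q hx (Finset.mem_range_succ_iff.mp hl)]
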